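/- arXiv:1605.04949 — 4 statements merged into one kernel-verified Lean document; each statement's English description precedes it below -/
import Mathlib

section
/- Let p ∈ ℤ, and let T be a trade with ℓ(T) < p < w(T) if T is a buy, or w(T) < p < ℓ(T) if T is a sell. Define the trade T' = (p, ℓ(T), w(T), s(T)), i.e., T' opens at p with winning price ℓ(T), losing price w(T), and size s(T) (so σ(T') = −σ(T)). Then for every price path M starting at p that closes both T and T', one has π(T,M) + π(T',M) = σ(T)·(p − o(T))·s(T). -/
/-- A trade: opening price, winning price, losing price, size. -/
structure Trade where
  op : ℤ
  win : ℤ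
  lose : ℤ
  size : ℚ
  deriving DecidableEq

/-- A buy: `w(T) > o(T) > ℓ(T)`. -/
def Trade.IsBuy (T : Trade) : Prop := T.win > T.op ∧ T.op > T.lose

/-- A sell: `w(T) < o(T) < ℓ(T)`. -/
def Trade.IsSell (T : Trade) : Prop := T.win < T.op ∧ T.op < T.lose

/-- A valid trade has positive size and is either a buy or a sell. -/
def Trade.Valid (T : Trade) : Prop := 0 < T.size ∧ (T.IsBuy ∨ T.IsSell)

/-- The sign of a trade: `1` for a buy, `-1` for a sell. -/
def Trade.sign (T : Trade) : ℤ := if T.op < T.win then 1 else -1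

/-- The value of `T` at price `p`: `val(T,p) = σ(T)·(p − o(T))·s(T)`. -/
def Trade.val (T : Trade) (p : ℤ) : ℚ := ((T.sign * (p - T.op) : ℤ) : ℚ) * T.size

/-- A price path starting at `p`: a nonempty finite sequence of integer prices whose
first element is `p` and in which consecutive prices differ by exactly 1. -/
def IsPricePath (p : ℤ) (M : List ℤ) : Prop :=
  M ≠ [] ∧ M.head? = some p ∧ M.Chain' (fun a b => b = a + 1 ∨ b = a - 1)

/-- `w` is reached by `M`, and is reached before `l` is. -/
def ReachesFirst (w l : ℤ) (M : List ℤ) : Prop :=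
  ∃ i : Fin M.length, M.get i = w ∧ ∀ j : Fin M.length, (j : ℕ) < (i : ℕ) → M.get j ≠ l

/-- `T` is won by `M`: the winning price is reached first. -/
def Trade.Wins (T : Trade) (M : List ℤ) : Prop := ReachesFirst T.win T.lose M

/-- `M` closes `T`: it reaches at least one of the winning/losing prices. -/
def Trade.ClosedBy (T : Trade) (M : List ℤ) : Prop := T.win ∈ M ∨ T.lose ∈ M

open Classical in
/-- The closing price of `T` under `M`: whichever of `w(T)`, `ℓ(T)` is reached first. -/
noncomputable def Trade.closePrice (T : Trade) (M : List ℤ) : ℤ :=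
  if T.Wins M then T.win else T.lose

/-- The broker's profit from `T` under `M`: `σ(T)·(close(T,M) − o(T))·s(T)`. -/
noncomputable def Trade.profit (T : Trade) (M : List ℤ) : ℚ :=
  ((T.sign * (T.closePrice M - T.op) : ℤ) : ℚ) * T.size

/-- The two orders of reaching distinct prices exclude each other. -/
theorem ReachesFirst.not_swap {w l : ℤ} {M : List ℤ} (hne : w ≠ l)
    (h : ReachesFirst w l M) : ¬ ReachesFirst l w M := by
  rintro ⟨j, hj, hj'⟩
  obtain ⟨i, hi, hi'⟩ := h
  rcases lt_trichotomy (i : ℕ) (j : ℕ) with hij | hij | hij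
  · exact hj' i hij hi
  · exact hne (hi.symm.trans ((congrArg M.get (Fin.ext hij)).trans hj))
  · exact hi' j hij hj

/-- A path that meets one of two prices reaches one of them first. -/
theorem reachesFirst_or_swap {w l : ℤ} {M : List ℤ} (h : w ∈ M ∨ l ∈ M) :
    ReachesFirst w l M ∨ ReachesFirst l w M := by
  classical
  have hex : ∃ n, ∃ hn : n < M.length, M.get ⟨n, hn⟩ = w ∨ M.get ⟨n, hn⟩ = l := by
    rcases h with h | h <;> obtain ⟨i, hi⟩ := List.get_of_mem h
    · exact ⟨i, i.2, Or.inl hi⟩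
    · exact ⟨i, i.2, Or.inr hi⟩
  obtain ⟨hn, hit⟩ := Nat.find_spec hex
  refine hit.imp (fun hw => ⟨⟨_, hn⟩, hw, fun j hj hjl => ?_⟩)
    (fun hl => ⟨⟨_, hn⟩, hl, fun j hj hjw => ?_⟩)
  · exact Nat.find_min hex hj ⟨j.2, Or.inr hjl⟩
  · exact Nat.find_min hex hj ⟨j.2, Or.inl hjw⟩

/-- A trade and its reversal close at the same price. -/
theorem Trade.closePrice_reversal (p : ℤ) {T : Trade} {M : List ℤ} (hne : T.win ≠ T.lose)
    (hc : T.ClosedBy M) :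
    (Trade.mk p T.lose T.win T.size).closePrice M = T.closePrice M := by
  unfold Trade.closePrice Trade.Wins
  by_cases h : ReachesFirst T.win T.lose M
  · simp [h, h.not_swap hne]
  · simp [h, (reachesFirst_or_swap hc).resolve_left h]

/-- The reversal of a trade has the opposite sign. -/
theorem Trade.sign_reversal {p : ℤ} {T : Trade} (hT : T.Valid)
    (hbuy : T.IsBuy → T.lose < p ∧ p < T.win)
    (hsell : T.IsSell → T.win < p ∧ p < T.lose) :
    (Trade.mk p T.lose T.win T.size).sign = -T.sign := by
  unfold Trade.sign
  rcases hT.2 with h | h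
  · simp [show T.op < T.win from h.1, (hbuy h).1.not_gt]
  · simp [h.1.not_gt, (hsell h).2]

/-- Closing a trade at the current price can be simulated: if `T` is a trade whose
closing prices lie strictly on either side of the current price `p`, and
`T' = (p, ℓ(T), w(T), s(T))` is its reversal, then for every price path `M` starting
at `p` that closes both `T` and `T'`, `π(T,M) + π(T',M) = σ(T)·(p − o(T))·s(T) = val(T,p)`. -/
theorem reversal_locks_value (p : ℤ) (T : Trade) (hT : T.Valid)
    (hbuy : T.IsBuy → T.lose < p ∧ p < T.win)
    (hsell : T.IsSell → T.win < p ∧ p < T.lose)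
    (M : List ℤ) (hM : IsPricePath p M)
    (hcT : T.ClosedBy M) (hcT' : (Trade.mk p T.lose T.win T.size).ClosedBy M) :
    T.profit M + (Trade.mk p T.lose T.win T.size).profit M
      = ((T.sign * (p - T.op) : ℤ) : ℚ) * T.size := by
  have hne : T.win ≠ T.lose := by
    rcases hT.2 with h | h
    · exact (h.2.trans h.1).ne'
    · exact (h.1.trans h.2).ne
  unfold Trade.profit
  rw [Trade.closePrice_reversal p hne hcT, Trade.sign_reversal hT hbuy hsell]
  push_cast
  ring
end

section
/- Let p ∈ ℤ and let 𝒯 be a finite set of trades each satisfying ℓ(T) < p < w(T) (if a buy) or w(T) < p < ℓ(T) (if a sell). For each T ∈ 𝒯 let T' = (p, ℓ(T), w(T), s(T)) be its reversal, and let 𝒯' = {T' : T ∈ 𝒯}. Then for every price path M starting at p that closes all trades of 𝒯 ∪ 𝒯', the total profit satisfies ∑_{T ∈ 𝒯 ∪ 𝒯'} π(T,M) = ∑_{T ∈ 𝒯} σ(T)·(p − o(T))·s(T), independently of M. In particular, by adding the reversal trades the trader locks the broker's total outcome on these trades at the current total value ∑_{T ∈ 𝒯} val(T,p). -/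
/-- The reversal at price `p` of a trade `T`: it opens at `p`, its winning price is
`ℓ(T)`, its losing price is `w(T)`, and it has size `s(T)`. -/
def Trade.rev (T : Trade) (p : ℤ) : Trade := ⟨p, T.lose, T.win, T.size⟩

/-- If `M` reaches at least one of two distinct prices, then exactly one of them is reached
first. -/
theorem reachesFirst_swap_iff_not {w l : ℤ} {M : List ℤ} (hne : w ≠ l)
    (hmem : w ∈ M ∨ l ∈ M) : ReachesFirst l w M ↔ ¬ ReachesFirst w l M := by
  constructor
  · rintro ⟨i, hi, hi'⟩ ⟨j, hj, hj'⟩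
    rcases lt_trichotomy (i : ℕ) j with h | h | h
    · exact hj' i h hi
    · exact hne (by rw [← hj, ← hi, Fin.ext h])
    · exact hi' j h hj
  · intro hnot
    have hex : ∃ n, ∃ h : n < M.length, M.get ⟨n, h⟩ = w ∨ M.get ⟨n, h⟩ = l := by
      rcases hmem with h | h
      · obtain ⟨i, hi⟩ := List.mem_iff_get.mp h
        exact ⟨i, i.isLt, Or.inl hi⟩
      · obtain ⟨i, hi⟩ := List.mem_iff_get.mp h
        exact ⟨i, i.isLt, Or.inr hi⟩
    classical
    obtain ⟨hlt, hw | hl⟩ := Nat.find_spec hex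
    · exact absurd ⟨⟨_, hlt⟩, hw, fun j hj h => Nat.find_min hex hj ⟨j.isLt, Or.inr h⟩⟩ hnot
    · exact ⟨⟨_, hlt⟩, hl, fun j hj h => Nat.find_min hex hj ⟨j.isLt, Or.inl h⟩⟩

/-- A trade and its reversal close at the same price. -/
theorem Trade.closePrice_rev {T : Trade} {M : List ℤ} (p : ℤ) (hne : T.win ≠ T.lose)
    (hclose : T.ClosedBy M) : (T.rev p).closePrice M = T.closePrice M := by
  have h : (T.rev p).Wins M ↔ ¬ T.Wins M := reachesFirst_swap_iff_not hne hclose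
  by_cases hw : T.Wins M <;> simp only [Trade.closePrice, h, hw] <;> simp [Trade.rev]

/-- The profit of a trade together with its reversal at `p` is the value of the trade at `p`. -/
theorem Trade.profit_add_profit_rev {T : Trade} {M : List ℤ} {p : ℤ}
    (hT : T.IsBuy ∧ T.lose < p ∧ p < T.win ∨ T.IsSell ∧ T.win < p ∧ p < T.lose)
    (hclose : T.ClosedBy M) : T.profit M + (T.rev p).profit M = T.val p := by
  have hne : T.win ≠ T.lose := by omega
  have hsign : (T.rev p).sign = -T.sign := by
    simp only [Trade.sign, Trade.rev, Trade.IsBuy, Trade.IsSell] at *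
    split_ifs <;> omega
  simp only [Trade.profit, Trade.closePrice_rev p hne hclose, hsign, Trade.val]
  simp only [Trade.rev]
  push_cast
  ring

/-- Let `𝒯` be a finite collection of trades whose closing prices lie strictly on either
side of the current price `p`, and let `𝒯' = {T' : T ∈ 𝒯}` be the collection of their
reversals at `p`.  For every price path `M` starting at `p` that closes all trades of
`𝒯 ∪ 𝒯'`, the total profit `∑_{T ∈ 𝒯 ∪ 𝒯'} π(T,M)` equals
`∑_{T ∈ 𝒯} σ(T)·(p − o(T))·s(T) = ∑_{T ∈ 𝒯} val(T,p)`, independently of `M`. -/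
theorem reversals_lock_total_value (p : ℤ) (𝒯 : Multiset Trade)
    (hval : ∀ T ∈ 𝒯, T.Valid)
    (hbuy : ∀ T ∈ 𝒯, T.IsBuy → T.lose < p ∧ p < T.win)
    (hsell : ∀ T ∈ 𝒯, T.IsSell → T.win < p ∧ p < T.lose)
    (M : List ℤ) (hM : IsPricePath p M)
    (hclose : ∀ T ∈ 𝒯 + 𝒯.map (fun T => T.rev p), T.ClosedBy M) :
    ((𝒯 + 𝒯.map (fun T => T.rev p)).map (fun T => T.profit M)).sum
      = (𝒯.map (fun T => T.val p)).sum := by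
  rw [Multiset.map_add, Multiset.sum_add, Multiset.map_map, ← Multiset.sum_map_add]
  refine congrArg Multiset.sum (Multiset.map_congr rfl fun T hT => ?_)
  refine Trade.profit_add_profit_rev ?_ (hclose T (Multiset.mem_add.mpr (Or.inl hT)))
  exact (hval T hT).2.imp (fun h => ⟨h, hbuy T hT h⟩) (fun h => ⟨h, hsell T hT h⟩)
end

section
/- Consider a turn of the online game starting from position P = (𝒯, g, p), and let P' = (𝒯', g, p) be the position after the trader has added his new trades. Let P⁺ be the position reached if the broker raises the price to p+1 and P⁻ the position reached if the broker lowers the price to p−1 (in each case closing all triggered trades and crediting their values to the gain). Then Tval(P') = Tval(P), Tval(P⁺) − Tval(P) = ∑_{T ∈ 𝒯'} σ(T)·s(T), and Tval(P⁻) − Tval(P) = −∑_{T ∈ 𝒯'} σ(T)·s(T); hence Tval(P⁺) − Tval(P) = −(Tval(P⁻) − Tval(P)), and in particular at least one of Tval(P⁺) ≥ Tval(P) or Tval(P⁻) ≥ Tval(P) holds. -/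
/-- A position of the online game: the set of open trades, the broker's accumulated
gain, and the current price. -/
structure Pos where
  trades : Finset Trade
  gain : ℚ
  price : ℤ

/-- The value of a position: `∑_{T open} val(T, p)`. -/
def Pos.val (P : Pos) : ℚ := ∑ T ∈ P.trades, T.val P.price

/-- The total value of a position: its value plus the broker's accumulated gain. -/
def Pos.tval (P : Pos) : ℚ := P.val + P.gain

/-- A legal set of trades added by the trader at price `p`: each opens at `p`, has
positive size, and has its losing and winning prices strictly on either side of `p`. -/
def LegalNew (p : ℤ) (N : Finset Trade) : Prop :=
  ∀ T ∈ N, T.op = p ∧ 0 < T.size ∧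
    ((T.lose < p ∧ p < T.win) ∨ (T.win < p ∧ p < T.lose))

/-- The broker's move: the price changes from `p` to `p + d`; every open trade whose
winning or losing price equals `p + d` is closed, its value at `p + d` being credited
to the broker's gain. -/
def brokerStep (P : Pos) (d : ℤ) : Pos where
  trades := P.trades.filter fun T => ¬(T.win = P.price + d ∨ T.lose = P.price + d)
  gain := P.gain +
    ∑ T ∈ P.trades.filter (fun T => T.win = P.price + d ∨ T.lose = P.price + d),
      T.val (P.price + d)
  price := P.price + d

/-- Opening trades at the current price does not change the total value. -/
theorem Pos.tval_add_trades (P : Pos) (𝒯' : Finset Trade) (hsub : P.trades ⊆ 𝒯')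
    (hnew : ∀ T ∈ 𝒯' \ P.trades, T.op = P.price) :
    Pos.tval ⟨𝒯', P.gain, P.price⟩ = P.tval := by
  have hval : ∑ T ∈ P.trades, T.val P.price = ∑ T ∈ 𝒯', T.val P.price :=
    Finset.sum_subset hsub fun T hT hT' => by
      simp [Trade.val, hnew T (Finset.mem_sdiff.mpr ⟨hT, hT'⟩)]
  simp [Pos.tval, Pos.val, hval]

/-- Closing the triggered trades moves value into the gain, so the total value changes only
through the price. -/
theorem brokerStep_tval (P : Pos) (d : ℤ) :
    (brokerStep P d).tval = P.tval + d * ∑ T ∈ P.trades, (T.sign : ℚ) * T.size := by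
  have hsplit := Finset.sum_filter_add_sum_filter_not P.trades
    (fun T => T.win = P.price + d ∨ T.lose = P.price + d) (fun T => T.val (P.price + d))
  have hval : ∑ T ∈ P.trades, T.val (P.price + d) =
      ∑ T ∈ P.trades, T.val P.price + d * ∑ T ∈ P.trades, (T.sign : ℚ) * T.size := by
    rw [Finset.mul_sum, ← Finset.sum_add_distrib]
    refine Finset.sum_congr rfl fun T _ => ?_
    simp only [Trade.val]
    push_cast
    ring
  simp only [Pos.tval, Pos.val, brokerStep]
  linarith

/-- One turn of the online game, starting at position `P = (𝒯, g, p)`: after the trader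
adds his trades, yielding the open set `𝒯' ⊇ 𝒯` and position `P' = (𝒯', g, p)`, we have
`Tval(P') = Tval(P)`; and if `P⁺`, `P⁻` are the positions after the broker respectively
raises or lowers the price, then `Tval(P⁺) − Tval(P) = ∑_{T ∈ 𝒯'} σ(T)·s(T)` and
`Tval(P⁻) − Tval(P) = −∑_{T ∈ 𝒯'} σ(T)·s(T)`; hence the two deviations are opposite,
and at least one of `Tval(P⁺) ≥ Tval(P)`, `Tval(P⁻) ≥ Tval(P)` holds. -/
theorem broker_never_goes_down (P : Pos) (𝒯' : Finset Trade)
    (hold : ∀ T ∈ P.trades, T.Valid)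
    (hsub : P.trades ⊆ 𝒯') (hnew : LegalNew P.price (𝒯' \ P.trades)) :
    Pos.tval ⟨𝒯', P.gain, P.price⟩ = P.tval ∧
    (brokerStep ⟨𝒯', P.gain, P.price⟩ 1).tval - P.tval
      = ∑ T ∈ 𝒯', (T.sign : ℚ) * T.size ∧
    (brokerStep ⟨𝒯', P.gain, P.price⟩ (-1)).tval - P.tval
      = -∑ T ∈ 𝒯', (T.sign : ℚ) * T.size ∧
    (brokerStep ⟨𝒯', P.gain, P.price⟩ 1).tval - P.tval
      = -((brokerStep ⟨𝒯', P.gain, P.price⟩ (-1)).tval - P.tval) ∧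
    (P.tval ≤ (brokerStep ⟨𝒯', P.gain, P.price⟩ 1).tval ∨
      P.tval ≤ (brokerStep ⟨𝒯', P.gain, P.price⟩ (-1)).tval) := by
  have hadd := P.tval_add_trades 𝒯' hsub fun T hT => (hnew T hT).1
  have hup := brokerStep_tval ⟨𝒯', P.gain, P.price⟩ 1
  have hdown := brokerStep_tval ⟨𝒯', P.gain, P.price⟩ (-1)
  rw [hadd] at hup hdown
  push_cast at hup hdown
  refine ⟨hadd, by linarith, by linarith, by linarith, ?_⟩
  rcases le_total 0 (∑ T ∈ 𝒯', (T.sign : ℚ) * T.size) with h | h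
  · left; linarith
  · right; linarith
end

section
/- In the online game, the broker cannot lose when playing optimally: there exists a broker strategy β (a function assigning to every finite history of the play, including the trades just added by the trader in the current turn, a move in {+1, −1}) such that for every trader strategy, in the resulting play every turn ends in a position of total value ≥ 0; consequently, if the resulting play ever ends (a turn finishes with no open trades), the broker's final gain is ≥ 0. -/
/-- The starting position of the online game. -/
def startPos : Pos := ⟨∅, 0, 0⟩

/-- The play determined by a trader strategy `τ` (assigning to each history of positions
the set of trades to add) and a broker strategy `β` (assigning to each history, together
with the trades just added, a move: `true` for `+1`, `false` for `−1`).  `playFull τ β n`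
is the pair of the position at the end of turn `n` and the history of positions so far. -/
def playFull (τ : List Pos → Finset Trade) (β : List Pos → Finset Trade → Bool) :
    ℕ → Pos × List Pos
  | 0 => (startPos, [startPos])
  | n + 1 =>
    let s := playFull τ β n
    let added := τ s.2
    let mid : Pos := ⟨s.1.trades ∪ added, s.1.gain, s.1.price⟩
    let next := brokerStep mid (if β s.2 added then 1 else -1)
    (next, s.2 ++ [next])

/-- The position after the trader adds the trades `N`. -/
def Pos.addTrades (P : Pos) (N : Finset Trade) : Pos := ⟨P.trades ∪ N, P.gain, P.price⟩

/-- Closing trades does not change the total value: after a move it is the old gain plus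
the value of the old trades at the new price. -/
lemma tval_brokerStep (P : Pos) (d : ℤ) :
    (brokerStep P d).tval = ∑ T ∈ P.trades, T.val (P.price + d) + P.gain := by
  have h := Finset.sum_filter_add_sum_filter_not P.trades
    (fun T => T.win = P.price + d ∨ T.lose = P.price + d) (fun T => T.val (P.price + d))
  simp only [Pos.tval, Pos.val, brokerStep]
  linarith

/-- The total values after an up-move and after a down-move average to the current one. -/
lemma tval_brokerStep_add_tval_brokerStep (P : Pos) :
    (brokerStep P 1).tval + (brokerStep P (-1)).tval = 2 * P.tval := by
  have h : ∑ T ∈ P.trades, T.val (P.price + 1) + ∑ T ∈ P.trades, T.val (P.price + -1)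
      = 2 * ∑ T ∈ P.trades, T.val P.price := by
    rw [← Finset.sum_add_distrib, Finset.mul_sum]
    refine Finset.sum_congr rfl fun T _ => ?_
    simp only [Trade.val]
    push_cast
    ring
  rw [tval_brokerStep, tval_brokerStep, Pos.tval, Pos.val]
  linarith

/-- Newly opened trades have value zero, so adding them preserves the total value. -/
lemma tval_addTrades {P : Pos} {N : Finset Trade} (hN : LegalNew P.price N) :
    (P.addTrades N).tval = P.tval := by
  have h : ∑ T ∈ P.trades, T.val P.price = ∑ T ∈ P.trades ∪ N, T.val P.price := by
    refine Finset.sum_subset Finset.subset_union_left fun T hT hT' => ?_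
    have hTN : T ∈ N := (Finset.mem_union.mp hT).resolve_left hT'
    simp [Trade.val, (hN T hTN).1]
  simp only [Pos.tval, Pos.val, Pos.addTrades, h]

/-- The greedy broker strategy: move up exactly when this leaves a nonnegative total value. -/
def greedyBroker (H : List Pos) (N : Finset Trade) : Bool :=
  decide (0 ≤ (brokerStep ((H.getLastD startPos).addTrades N) 1).tval)

lemma playFull_history_getLastD (τ : List Pos → Finset Trade)
    (β : List Pos → Finset Trade → Bool) (n : ℕ) :
    (playFull τ β n).2.getLastD startPos = (playFull τ β n).1 := by
  cases n <;> simp [playFull]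

lemma tval_playFull_greedyBroker_nonneg {τ : List Pos → Finset Trade}
    (hτ : ∀ n, LegalNew (playFull τ greedyBroker n).1.price (τ (playFull τ greedyBroker n).2))
    (n : ℕ) : 0 ≤ (playFull τ greedyBroker n).1.tval := by
  induction n with
  | zero => simp [playFull, startPos, Pos.tval, Pos.val]
  | succ n ih =>
    set s := playFull τ greedyBroker n
    have hstep : (playFull τ greedyBroker (n + 1)).1 =
        brokerStep (s.1.addTrades (τ s.2)) (if greedyBroker s.2 (τ s.2) then 1 else -1) := rfl
    have hlast : s.2.getLastD startPos = s.1 := playFull_history_getLastD τ greedyBroker n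
    have havg := tval_brokerStep_add_tval_brokerStep (s.1.addTrades (τ s.2))
    rw [tval_addTrades (hτ n)] at havg
    rw [hstep, greedyBroker, hlast]
    by_cases hup : 0 ≤ (brokerStep (s.1.addTrades (τ s.2)) 1).tval
    · simp [hup]
    · simp only [hup, decide_false, Bool.false_eq_true, if_false]
      linarith

/-- The broker cannot lose when playing optimally: there is a broker strategy `β` such
that against every trader strategy `τ` (whose additions are always legal at the current
price), every turn of the resulting play ends in a position of total value `≥ 0`;
consequently, whenever a turn finishes with no open trades, the broker's gain is `≥ 0`. -/
theorem broker_cannot_lose :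
    ∃ β : List Pos → Finset Trade → Bool,
      ∀ τ : List Pos → Finset Trade,
        (∀ n : ℕ, LegalNew (playFull τ β n).1.price (τ (playFull τ β n).2)) →
        (∀ n : ℕ, 0 ≤ (playFull τ β n).1.tval) ∧
        (∀ n : ℕ, (playFull τ β n).1.trades = ∅ → 0 ≤ (playFull τ β n).1.gain) := by
  refine ⟨greedyBroker, fun τ hτ => ⟨tval_playFull_greedyBroker_nonneg hτ, fun n hn => ?_⟩⟩
  have h := tval_playFull_greedyBroker_nonneg hτ n
  simpa [Pos.tval, Pos.val, hn] using h
end
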